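/- Let q be a power of a prime p, and let n = p^ν · n' where ν ≥ 0 and p does not divide n'. Then the number of Hermitian complementary dual cyclic codes of length n over F_{q^2} is 2^{|Ω_{q^2,n'}| + |Λ_{q^2,n'}|}; in particular, this number is independent of ν. -/

import Mathlib

open Polynomial

/-- The reciprocal polynomial `f*(x) = x^(deg f) * f(0)⁻¹ * f(1/x)`. -/
noncomputable def crecip {F : Type*} [Field F] (f : F[X]) : F[X] :=
  C (f.coeff 0)⁻¹ * f.reverse

/-- The conjugate-reciprocal polynomial `f†`, obtained by applying the
conjugation `a ↦ a ^ q` to each coefficient of `f*`. -/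
noncomputable def cdagger {F : Type*} [Field F] (q : ℕ) (f : F[X]) : F[X] :=
  (crecip f).sum fun i a => C (a ^ q) * X ^ i

/-- A polynomial is SCRIM if it is monic, irreducible, and self-conjugate-reciprocal. -/
def IsSCRIM {F : Type*} [Field F] (q : ℕ) (f : F[X]) : Prop :=
  f.Monic ∧ Irreducible f ∧ f = cdagger q f

/-- The set `Ω_{q²,n}` of SCRIM factors of `x^n - 1` over `F = F_{q²}`. -/
def scrimFactors (F : Type*) [Field F] (q n : ℕ) : Set F[X] :=
  {f | IsSCRIM q f ∧ f ∣ X ^ n - 1}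

/-- The codewords of a cyclic code, viewed as the polynomials of degree `< n`
in the ideal `C` of `F[x]` corresponding to the ideal `C` of `F[x]/⟨x^n - 1⟩`. -/
def codewords {F : Type*} [Field F] (C : Ideal F[X]) (n : ℕ) : Set F[X] :=
  {f | f ∈ C ∧ f.degree < (n : WithBot ℕ)}

/-- The Hermitian dual code `C^⊥H`, as a set of polynomials of degree `< n`. -/
def hermDual {F : Type*} [Field F] (q : ℕ) (C : Ideal F[X]) (n : ℕ) : Set F[X] :=
  {u | u.degree < (n : WithBot ℕ) ∧ ∀ v ∈ C, v.degree < (n : WithBot ℕ) →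
      ∑ i ∈ Finset.range n, u.coeff i * (v.coeff i) ^ q = 0}

/-- The set `Λ_{q²,m}` of unordered pairs `{g, g†}` of conjugate-reciprocal
irreducible monic factors of `x^m - 1` with `g ≠ g†`. -/
def crimPairs (F : Type*) [Field F] (q m : ℕ) : Set (Set F[X]) :=
  {s | ∃ g : F[X], g.Monic ∧ Irreducible g ∧ g ∣ X ^ m - 1 ∧
        g ≠ cdagger q g ∧ s = {g, cdagger q g}}

/-!
Reversing a factor turns an inner product into a coefficient of a product, so the Hermitian dual
of the code generated by `g`, where `g h = x^n - 1`, consists of the `u` of degree less than `n`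
with `x^n - 1 ∣ u g†`. It meets the code trivially exactly when `g†` is coprime to `h`. As
`g† ∣ (x^n - 1)† = g h`, this forces `g† ∣ g` and hence `g† = g`. The complementary dual codes
therefore correspond to the monic `g` with `g† = g` that are coprime to their cofactor. Such a `g`
is determined by its set of monic irreducible factors, which can be any set of factors of
`x^n - 1` stable under the involution `†`, that is, any union of orbits of `†`. The orbits of size
one are the SCRIM factors and those of size two the pairs `{g, g†}`. Finally `x^n - 1` is the
`p^ν`-th power of `x^n' - 1`, so both have the same irreducible factors.
-/

open UniqueFactorizationMonoid

section Reverse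

variable {R : Type*} [Semiring R]

theorem ne_zero_of_coeff_ne_zero {f : R[X]} {i : ℕ} (hf : f.coeff i ≠ 0) : f ≠ 0 := by
  rintro rfl
  exact hf (coeff_zero i)

theorem natDegree_reverse_of_coeff_zero_ne_zero {f : R[X]} (h0 : f.coeff 0 ≠ 0) :
    f.reverse.natDegree = f.natDegree := by
  rw [reverse_natDegree, natTrailingDegree_eq_zero.2 (Or.inr h0), Nat.sub_zero]

theorem reverse_reverse_of_coeff_zero_ne_zero {f : R[X]} (h0 : f.coeff 0 ≠ 0) :
    f.reverse.reverse = f := by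
  rw [reverse, natDegree_reverse_of_coeff_zero_ne_zero h0, reverse, reflect_reflect]

theorem coeff_zero_ne_zero_of_dvd {f g : R[X]} (hfg : f ∣ g) (h0 : g.coeff 0 ≠ 0) :
    f.coeff 0 ≠ 0 := by
  obtain ⟨k, rfl⟩ := hfg
  exact left_ne_zero_of_mul (mul_coeff_zero f k ▸ h0)

end Reverse

section ConjugateReciprocal

variable {F : Type*} [Field F]

theorem crecip_mul (f g : F[X]) : crecip (f * g) = crecip f * crecip g := by
  simp only [crecip, reverse_mul_of_domain, mul_coeff_zero, mul_inv, C_mul]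
  ring

theorem coeff_zero_crecip {f : F[X]} (hf : f.Monic) : (crecip f).coeff 0 = (f.coeff 0)⁻¹ := by
  rw [crecip, coeff_C_mul, coeff_zero_reverse, hf.leadingCoeff, mul_one]

theorem natDegree_crecip {f : F[X]} (h0 : f.coeff 0 ≠ 0) :
    (crecip f).natDegree = f.natDegree := by
  rw [crecip, natDegree_C_mul (inv_ne_zero h0), natDegree_reverse_of_coeff_zero_ne_zero h0]

theorem crecip_monic {f : F[X]} (h0 : f.coeff 0 ≠ 0) : (crecip f).Monic := by
  rw [crecip, Monic, leadingCoeff_mul, leadingCoeff_C, reverse_leadingCoeff, trailingCoeff,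
    natTrailingDegree_eq_zero.2 (Or.inr h0), inv_mul_cancel₀ h0]

theorem crecip_crecip {f : F[X]} (hf : f.Monic) (h0 : f.coeff 0 ≠ 0) :
    crecip (crecip f) = f := by
  rw [crecip, coeff_zero_crecip hf, inv_inv, crecip, reverse_mul_of_domain, reverse_C,
    reverse_reverse_of_coeff_zero_ne_zero h0, ← mul_assoc, ← C_mul, mul_inv_cancel₀ h0, C_1,
    one_mul]

theorem map_crecip {K : Type*} [Field K] (φ : F →+* K) (f : F[X]) :
    (crecip f).map φ = crecip (f.map φ) := by
  rw [crecip, crecip, Polynomial.map_mul, map_C, map_inv₀, coeff_map, reverse, reverse,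
    reflect_map, natDegree_map]

theorem crecip_X_pow_sub_one {n : ℕ} (hn : n ≠ 0) :
    crecip (X ^ n - 1 : F[X]) = X ^ n - 1 := by
  have hdeg : (X ^ n - 1 : F[X]).natDegree = n := natDegree_X_pow_sub_C
  rw [crecip, reverse, hdeg, reflect_sub, reflect_monomial, reflect_one, revAt_le le_rfl]
  simp [coeff_X_pow, hn.symm]

variable {φ : F →+* F} {q : ℕ} (hφ : ∀ a, φ a = a ^ q)

include hφ

theorem cdagger_eq_map_crecip (f : F[X]) : cdagger q f = (crecip f).map φ := by
  simp only [cdagger, Polynomial.map, eval₂_eq_sum, RingHom.comp_apply, hφ]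

theorem cdagger_mul (f g : F[X]) : cdagger q (f * g) = cdagger q f * cdagger q g := by
  simp only [cdagger_eq_map_crecip hφ, crecip_mul, Polynomial.map_mul]

theorem cdagger_dvd_cdagger {f g : F[X]} (hfg : f ∣ g) : cdagger q f ∣ cdagger q g := by
  obtain ⟨k, rfl⟩ := hfg
  exact ⟨cdagger q k, cdagger_mul hφ f k⟩

theorem cdagger_monic {f : F[X]} (h0 : f.coeff 0 ≠ 0) : (cdagger q f).Monic := by
  rw [cdagger_eq_map_crecip hφ]
  exact (crecip_monic h0).map φ

theorem natDegree_cdagger {f : F[X]} (h0 : f.coeff 0 ≠ 0) :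
    (cdagger q f).natDegree = f.natDegree := by
  rw [cdagger_eq_map_crecip hφ, natDegree_map, natDegree_crecip h0]

theorem coeff_zero_cdagger_ne_zero {f : F[X]} (hf : f.Monic) (h0 : f.coeff 0 ≠ 0) :
    (cdagger q f).coeff 0 ≠ 0 := by
  rw [cdagger_eq_map_crecip hφ, coeff_map, coeff_zero_crecip hf, _root_.map_ne_zero]
  exact inv_ne_zero h0

theorem cdagger_X_pow_sub_one {n : ℕ} (hn : n ≠ 0) :
    cdagger q (X ^ n - 1 : F[X]) = X ^ n - 1 := by
  rw [cdagger_eq_map_crecip hφ, crecip_X_pow_sub_one hn]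
  simp only [Polynomial.map_sub, Polynomial.map_pow, map_X, Polynomial.map_one]

theorem isUnit_cdagger_iff {f : F[X]} (h0 : f.coeff 0 ≠ 0) :
    IsUnit (cdagger q f) ↔ IsUnit f := by
  have hf : f ≠ 0 := ne_zero_of_coeff_ne_zero h0
  rw [isUnit_iff_degree_eq_zero, isUnit_iff_degree_eq_zero,
    degree_eq_natDegree (cdagger_monic hφ h0).ne_zero, degree_eq_natDegree hf,
    natDegree_cdagger hφ h0]

theorem isRelPrime_cdagger_iff {M g h : F[X]} (hM : cdagger q M = M) (hM0 : M.coeff 0 ≠ 0)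
    (hg : g.Monic) (hgh : g * h = M) :
    IsRelPrime (cdagger q g) h ↔ cdagger q g = g ∧ IsRelPrime g h := by
  refine ⟨fun hrel => ?_, fun ⟨heq, hrel⟩ => heq.symm ▸ hrel⟩
  have hg0 : g.coeff 0 ≠ 0 := coeff_zero_ne_zero_of_dvd ⟨h, hgh.symm⟩ hM0
  have hdvd : cdagger q g ∣ g := by
    refine hrel.dvd_of_dvd_mul_right ?_
    rw [hgh, ← hM]
    exact cdagger_dvd_cdagger hφ ⟨h, hgh.symm⟩
  have heq : cdagger q g = g :=
    (eq_of_monic_of_dvd_of_natDegree_le (cdagger_monic hφ hg0) hg hdvd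
      (natDegree_cdagger hφ hg0).ge).symm
  exact ⟨heq, heq ▸ hrel⟩

variable (hφφ : Function.Involutive φ)

include hφφ

theorem cdagger_cdagger {f : F[X]} (hf : f.Monic) (h0 : f.coeff 0 ≠ 0) :
    cdagger q (cdagger q f) = f := by
  have hcomp : φ.comp φ = RingHom.id F := RingHom.ext hφφ
  rw [cdagger_eq_map_crecip hφ, cdagger_eq_map_crecip hφ, ← map_crecip, Polynomial.map_map, hcomp,
    Polynomial.map_id, crecip_crecip hf h0]

theorem irreducible_cdagger {f : F[X]} (hf : f.Monic) (h0 : f.coeff 0 ≠ 0)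
    (hirr : Irreducible f) : Irreducible (cdagger q f) := by
  refine ⟨(isUnit_cdagger_iff hφ h0).not.2 hirr.not_isUnit, fun a b hab => ?_⟩
  have h0' : (a * b).coeff 0 ≠ 0 := hab ▸ coeff_zero_cdagger_ne_zero hφ hf h0
  have hfab : f = cdagger q a * cdagger q b := by
    rw [← cdagger_mul hφ, ← hab, cdagger_cdagger hφ hφφ hf h0]
  rw [← isUnit_cdagger_iff hφ (coeff_zero_ne_zero_of_dvd (dvd_mul_right a b) h0'),
    ← isUnit_cdagger_iff hφ (coeff_zero_ne_zero_of_dvd (dvd_mul_left b a) h0')]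
  exact hirr.isUnit_or_isUnit hfab

end ConjugateReciprocal

section HermitianDual

theorem coeff_mul_reflect {R : Type*} [Semiring R] (a : R[X]) {k : R[X]} {m : ℕ}
    (hk : k.natDegree ≤ m) (d : ℕ) :
    (a * k.reflect m).coeff (d + m) = ∑ j ∈ Finset.range (m + 1), a.coeff (d + j) * k.coeff j := by
  have hdeg : (k.reflect m).natDegree < m + 1 :=
    Nat.lt_succ_of_le (natDegree_reflect_le.trans (max_le le_rfl hk))
  rw [as_sum_range' (k.reflect m) (m + 1) hdeg, Finset.mul_sum, finsetSum_coeff,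
    ← Finset.sum_range_reflect]
  refine Finset.sum_congr rfl fun j hj => ?_
  have hjm : j ≤ m := Nat.lt_succ_iff.1 (Finset.mem_range.1 hj)
  rw [Nat.add_sub_cancel, show d + m = d + j + (m - j) by omega, coeff_mul_monomial, coeff_reflect,
    revAt_le (Nat.sub_le m j), Nat.sub_sub_self hjm]

theorem coeff_modByMonic_X_pow_sub_one {R : Type*} [CommRing R] {n i : ℕ} {f : R[X]}
    (hf : f.natDegree < n + i) (hi : i < n) : (f %ₘ (X ^ n - 1)).coeff i = f.coeff i := by
  have hM : (X ^ n - 1 : R[X]).Monic := monic_X_pow_sub_C 1 (by omega)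
  nontriviality R
  have hdeg : (X ^ n - 1 : R[X]).natDegree = n := natDegree_X_pow_sub_C
  have hquot : (f /ₘ (X ^ n - 1)).coeff i = 0 := by
    rcases lt_or_ge f.natDegree n with hfn | hfn
    · rw [(divByMonic_eq_zero_iff hM).2 (degree_lt_degree (hfn.trans_eq hdeg.symm)), coeff_zero]
    · apply coeff_eq_zero_of_natDegree_lt
      rw [natDegree_divByMonic _ hM, hdeg]
      omega
  conv_rhs => rw [← modByMonic_add_div f (X ^ n - 1)]
  rw [coeff_add, sub_mul, one_mul, coeff_sub, coeff_X_pow_mul', if_neg hi.not_ge, hquot, sub_zero,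
    add_zero]

variable {F : Type*} [Field F]

theorem X_pow_sub_one_dvd_iff_coeff {n : ℕ} {a g : F[X]} (hn : 0 < n) (hg : g ∣ X ^ n - 1)
    (hga : g ∣ a) (ha : a.natDegree < n + g.natDegree) :
    X ^ n - 1 ∣ a ↔ ∀ i, g.natDegree ≤ i → i < n → a.coeff i = 0 := by
  have hM : (X ^ n - 1 : F[X]).Monic := monic_X_pow_sub_C 1 hn.ne'
  have hcoeff : ∀ i, g.natDegree ≤ i → i < n → (a %ₘ (X ^ n - 1)).coeff i = a.coeff i :=
    fun i hgi hi => coeff_modByMonic_X_pow_sub_one (by omega) hi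
  rw [← modByMonic_eq_zero_iff_dvd hM]
  constructor
  · intro h i hgi hi
    rw [← hcoeff i hgi hi, h, coeff_zero]
  · intro h
    have hgr : g ∣ a %ₘ (X ^ n - 1) := by
      rw [modByMonic_eq_sub_mul_div]
      exact dvd_sub hga (hg.mul_right _)
    -- The vanishing coefficients force the remainder, a multiple of `g`, below the degree of `g`.
    refine eq_zero_of_dvd_of_degree_lt hgr ?_
    rw [degree_eq_natDegree (ne_zero_of_dvd_ne_zero hM.ne_zero hg),
      degree_lt_iff_coeff_zero]
    intro i hgi
    rcases lt_or_ge i n with hi | hi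
    · rw [hcoeff i hgi hi, h i hgi hi]
    · exact coeff_eq_zero_of_degree_lt ((degree_modByMonic_lt a hM).trans_le
        ((degree_X_pow_sub_C hn 1).trans_le (Nat.cast_le.2 hi)))

theorem isRelPrime_iff_forall_degree_lt {a h : F[X]} (hh : h ≠ 0) :
    IsRelPrime a h ↔ ∀ k : F[X], k.degree < h.degree → h ∣ k * a → k = 0 := by
  constructor
  · intro hah k hkh hk
    exact eq_zero_of_dvd_of_degree_lt (hah.symm.dvd_of_dvd_mul_right hk) hkh
  · intro hzero
    refine WfDvdMonoid.isRelPrime_of_no_irreducible_factors (fun h0 => hh h0.2) ?_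
    rintro d hd hda ⟨k, rfl⟩
    refine right_ne_zero_of_mul hh (hzero k ?_ ?_)
    · rw [degree_mul, degree_eq_natDegree (right_ne_zero_of_mul hh), degree_eq_natDegree hd.ne_zero]
      exact_mod_cast Nat.lt_add_of_pos_left hd.natDegree_pos
    · rw [mul_comm k]
      exact mul_dvd_mul_right hda k

variable {φ : F →+* F} {q : ℕ} (hφ : ∀ a, φ a = a ^ q)

include hφ

theorem sum_range_coeff_mul_coeff_mul_pow (u : F[X]) {g k : F[X]} {m n : ℕ}
    (hk : k.natDegree ≤ m) (hn : n = g.natDegree + m + 1) :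
    ∑ i ∈ Finset.range n, u.coeff i * (g * k).coeff i ^ q =
      ∑ j ∈ Finset.range (m + 1),
        (u * (g.map φ).reverse).coeff (g.natDegree + j) * k.coeff j ^ q := by
  have hgk : ((g * k).map φ).natDegree ≤ g.natDegree + m := by
    rw [natDegree_map]
    exact natDegree_mul_le.trans (by omega)
  have hreflect : ((g * k).map φ).reflect (g.natDegree + m) =
      (g.map φ).reverse * (k.map φ).reflect m := by
    rw [Polynomial.map_mul, reflect_mul _ _ (natDegree_map φ).le ((natDegree_map φ).trans_le hk),
      reverse, natDegree_map]
  subst hn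
  calc ∑ i ∈ Finset.range (g.natDegree + m + 1), u.coeff i * (g * k).coeff i ^ q
      = (u * ((g * k).map φ).reflect (g.natDegree + m)).coeff (0 + (g.natDegree + m)) := by
        rw [coeff_mul_reflect u hgk]
        simp only [zero_add, coeff_map, hφ]
    _ = (u * (g.map φ).reverse * (k.map φ).reflect m).coeff (g.natDegree + m) := by
        rw [hreflect, mul_assoc, zero_add]
    _ = _ := by
        rw [coeff_mul_reflect _ ((natDegree_map φ).trans_le hk)]
        simp only [coeff_map, hφ]

theorem mem_hermDual_span_iff_coeff {n : ℕ} {g u : F[X]} (hg : g.coeff 0 ≠ 0) :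
    u ∈ hermDual q (Ideal.span {g}) n ↔ u.degree < n ∧
      ∀ i, g.natDegree ≤ i → i < n → (u * cdagger q g).coeff i = 0 := by
  have hcoeff (i : ℕ) :
      (u * cdagger q g).coeff i = 0 ↔ (u * (g.map φ).reverse).coeff i = 0 := by
    rw [cdagger_eq_map_crecip hφ, map_crecip, crecip, mul_left_comm, coeff_C_mul, coeff_map]
    simp only [mul_eq_zero, inv_eq_zero, map_eq_zero, hg, false_or]
  simp only [hcoeff]
  refine and_congr_right fun _ => ⟨fun h i hgi hi => ?_, fun h v hv hvn => ?_⟩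
  · obtain ⟨j, rfl⟩ := Nat.exists_eq_add_of_le hgi
    have hX : (X ^ j : F[X]).natDegree ≤ n - g.natDegree - 1 := by
      rw [natDegree_X_pow]
      omega
    have hdeg : (g * X ^ j).degree < (n : WithBot ℕ) := by
      have hg0 : g ≠ 0 := ne_zero_of_coeff_ne_zero hg
      rw [degree_mul, degree_X_pow, degree_eq_natDegree hg0]
      exact_mod_cast hi
    have horth := h (g * X ^ j) (Ideal.mem_span_singleton.2 (dvd_mul_right g _)) hdeg
    rw [sum_range_coeff_mul_coeff_mul_pow hφ u hX (by omega)] at horth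
    simp only [← hφ, coeff_X_pow] at horth
    simpa [show j < n - g.natDegree - 1 + 1 by omega] using horth
  · obtain ⟨k, rfl⟩ := Ideal.mem_span_singleton.1 hv
    rcases eq_or_ne (g * k) 0 with hgk | hgk
    · simp only [hgk, coeff_zero, ← hφ, map_zero, mul_zero, Finset.sum_const_zero]
    have hlt : g.natDegree + k.natDegree < n := by
      rwa [← natDegree_lt_iff_degree_lt hgk,
        natDegree_mul (left_ne_zero_of_mul hgk) (right_ne_zero_of_mul hgk)] at hvn
    rw [sum_range_coeff_mul_coeff_mul_pow hφ u (m := n - g.natDegree - 1) (by omega) (by omega)]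
    refine Finset.sum_eq_zero fun j hj => ?_
    rw [Finset.mem_range] at hj
    rw [h _ (Nat.le_add_right _ j) (by omega), zero_mul]

theorem mem_hermDual_span_iff {n : ℕ} {g u : F[X]} (hn : 0 < n) (hg : g ∣ X ^ n - 1) :
    u ∈ hermDual q (Ideal.span {g}) n ↔ u.degree < n ∧ X ^ n - 1 ∣ u * cdagger q g := by
  have hg0 : g.coeff 0 ≠ 0 := coeff_zero_ne_zero_of_dvd hg (by simp [coeff_X_pow, hn.ne])
  have hgdvd : cdagger q g ∣ X ^ n - 1 := by
    simpa only [cdagger_X_pow_sub_one hφ hn.ne'] using cdagger_dvd_cdagger hφ hg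
  rw [mem_hermDual_span_iff_coeff hφ hg0, ← natDegree_cdagger hφ hg0]
  refine and_congr_right fun hu => (X_pow_sub_one_dvd_iff_coeff hn hgdvd (dvd_mul_left _ u) ?_).symm
  have hun : u.natDegree < n := by
    rcases eq_or_ne u 0 with rfl | hu0
    · simpa using hn
    · exact (natDegree_lt_iff_degree_lt hu0).2 hu
  exact natDegree_mul_le.trans_lt (by omega)

theorem codewords_inter_hermDual_eq_singleton_zero_iff {n : ℕ} {g h : F[X]} (hn : 0 < n)
    (hgh : g * h = X ^ n - 1) :
    codewords (Ideal.span {g}) n ∩ hermDual q (Ideal.span {g}) n = {0} ↔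
      IsRelPrime (cdagger q g) h := by
  have hM : (X ^ n - 1 : F[X]).Monic := monic_X_pow_sub_C 1 hn.ne'
  have hMdeg : (X ^ n - 1 : F[X]).degree = n := degree_X_pow_sub_C hn 1
  have hg0 : g ≠ 0 := left_ne_zero_of_mul (hgh ▸ hM.ne_zero)
  have hh0 : h ≠ 0 := right_ne_zero_of_mul (hgh ▸ hM.ne_zero)
  have hmem (k : F[X]) :
      g * k ∈ codewords (Ideal.span {g}) n ∩ hermDual q (Ideal.span {g}) n ↔
        k.degree < h.degree ∧ h ∣ k * cdagger q g := by
    rw [Set.mem_inter_iff, mem_hermDual_span_iff hφ hn ⟨h, hgh.symm⟩, ← hgh, mul_assoc,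
      mul_dvd_mul_iff_left hg0, codewords, Set.mem_ofPred_eq, Ideal.mem_span_singleton, ← hMdeg,
      ← hgh, degree_mul, degree_mul,
      WithBot.add_lt_add_iff_left (degree_ne_bot.2 hg0)]
    simp only [dvd_mul_right, true_and, and_self_left]
  rw [isRelPrime_iff_forall_degree_lt hh0, Set.eq_singleton_iff_unique_mem]
  constructor
  · rintro ⟨-, hzero⟩ k hkh hk
    exact (mul_eq_zero_iff_left hg0).1 (hzero _ ((hmem k).2 ⟨hkh, hk⟩))
  · intro hzero
    refine ⟨by simpa [bot_lt_iff_ne_bot, hh0] using hmem 0, fun u hu => ?_⟩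
    obtain ⟨k, rfl⟩ := Ideal.mem_span_singleton.1 hu.1.1
    rw [hmem] at hu
    rw [hzero k hu.1 hu.2, mul_zero]

end HermitianDual

section UnitaryDivisor

variable {R : Type*} [CommMonoidWithZero R]

/-- A unitary divisor of `a` is a divisor `g` coprime to its cofactor. In the absence of a
division operation the cofactor is quantified over. -/
def IsUnitaryDivisor (g a : R) : Prop :=
  ∃ h, IsRelPrime g h ∧ g * h = a

theorem normalize_prod_eq_self [StrongNormalizationMonoid R] {s : Multiset R}
    (hnorm : ∀ p ∈ s, normalize p = p) :
    normalize s.prod = s.prod := by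
  rw [← coe_normalizeHom, map_multiset_prod, coe_normalizeHom, Multiset.map_congr rfl hnorm,
    Multiset.map_id']

section NormalizationMonoid

variable [NormalizationMonoid R] [UniqueFactorizationMonoid R]

theorem mem_primeFactors_iff {p a : R} (ha : a ≠ 0) :
    p ∈ primeFactors a ↔ Irreducible p ∧ normalize p = p ∧ p ∣ a := by
  rw [mem_primeFactors, mem_normalizedFactors_iff' ha]

theorem primeFactors_subset_of_dvd {a b : R} (hb : b ≠ 0) (hab : a ∣ b) :
    primeFactors a ⊆ primeFactors b := by
  intro p hp
  rw [mem_primeFactors_iff (ne_zero_of_dvd_ne_zero hb hab)] at hp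
  exact (mem_primeFactors_iff hb).2 ⟨hp.1, hp.2.1, hp.2.2.trans hab⟩

theorem isRelPrime_iff_disjoint_primeFactors {a b : R} (ha : a ≠ 0) (hb : b ≠ 0) :
    IsRelPrime a b ↔ Disjoint (primeFactors a) (primeFactors b) := by
  refine ⟨disjoint_primeFactors, fun hdisj => ?_⟩
  refine WfDvdMonoid.isRelPrime_of_no_irreducible_factors (fun h => ha h.1) fun d hd hda hdb => ?_
  obtain ⟨p, hp, hdp⟩ := exists_mem_normalizedFactors_of_dvd ha hd hda
  have hpb : p ∈ primeFactors b := by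
    rw [mem_primeFactors_iff hb, ← hdp.dvd_iff_dvd_left]
    exact ⟨irreducible_of_normalized_factor p hp, normalize_normalized_factor p hp, hdb⟩
  exact Finset.disjoint_left.1 hdisj (mem_primeFactors.2 hp) hpb

theorem IsUnitaryDivisor.dvd_of_primeFactors_subset {g g' a : R} (ha : a ≠ 0)
    (hg : IsUnitaryDivisor g a) (hg' : IsUnitaryDivisor g' a)
    (hsub : primeFactors g ⊆ primeFactors g') : g ∣ g' := by
  obtain ⟨h, -, hgh⟩ := hg
  obtain ⟨h', hg'h', rfl⟩ := hg'
  have hrel : IsRelPrime g h' := by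
    rw [isRelPrime_iff_disjoint_primeFactors (left_ne_zero_of_mul (hgh ▸ ha))
      (right_ne_zero_of_mul ha)]
    exact (disjoint_primeFactors hg'h').mono_left hsub
  exact hrel.dvd_of_dvd_mul_right ⟨h, hgh.symm⟩

theorem mem_primeFactors_prod {s : Multiset R} (hirr : ∀ p ∈ s, Irreducible p)
    (hnorm : ∀ p ∈ s, normalize p = p) {p : R} : p ∈ primeFactors s.prod ↔ p ∈ s := by
  rw [mem_primeFactors, normalizedFactors_prod_eq s hirr, Multiset.map_congr rfl hnorm,
    Multiset.map_id']

end NormalizationMonoid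

variable [StrongNormalizationMonoid R] [UniqueFactorizationMonoid R]

theorem exists_isUnitaryDivisor_primeFactors_eq {a : R} (ha : a ≠ 0) {U : Finset R}
    (hU : U ⊆ primeFactors a) :
    ∃ g, normalize g = g ∧ IsUnitaryDivisor g a ∧ primeFactors g = U := by
  classical
  set s := (normalizedFactors a).filter (· ∈ U)
  set t := (normalizedFactors a).filter (· ∉ U)
  have hirr : ∀ p ∈ normalizedFactors a, Irreducible p := irreducible_of_normalized_factor
  have hnorm : ∀ p ∈ normalizedFactors a, normalize p = p := normalize_normalized_factor
  have hs : ∀ {p}, p ∈ primeFactors s.prod ↔ p ∈ s :=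
    mem_primeFactors_prod (fun p hp => hirr p (Multiset.mem_of_mem_filter hp))
      fun p hp => hnorm p (Multiset.mem_of_mem_filter hp)
  have ht : ∀ {p}, p ∈ primeFactors t.prod ↔ p ∈ t :=
    mem_primeFactors_prod (fun p hp => hirr p (Multiset.mem_of_mem_filter hp))
      fun p hp => hnorm p (Multiset.mem_of_mem_filter hp)
  obtain ⟨u, hu⟩ : Associated (s.prod * t.prod) a := by
    rw [← Multiset.prod_add, Multiset.filter_add_not]
    exact prod_normalizedFactors ha
  have hst : s.prod * t.prod ≠ 0 := left_ne_zero_of_mul (hu ▸ ha)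
  refine ⟨s.prod, normalize_prod_eq_self fun p hp => hnorm p (Multiset.mem_of_mem_filter hp),
    ⟨t.prod * u, ?_, by rw [← mul_assoc, hu]⟩, ?_⟩
  · rw [isRelPrime_mul_unit_right_right u.isUnit, isRelPrime_iff_disjoint_primeFactors
      (left_ne_zero_of_mul hst) (right_ne_zero_of_mul hst), Finset.disjoint_left]
    exact fun p hps hpt => Multiset.of_mem_filter (ht.1 hpt) (Multiset.of_mem_filter (hs.1 hps))
  · ext p
    rw [hs, Multiset.mem_filter, ← mem_primeFactors]
    exact and_iff_right_of_imp fun hp => hU hp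

theorem bijOn_primeFactors {a : R} (ha : a ≠ 0) :
    Set.BijOn primeFactors {g | normalize g = g ∧ IsUnitaryDivisor g a}
      {U | U ⊆ primeFactors a} := by
  refine ⟨?_, ?_, ?_⟩
  · rintro g ⟨-, h, -, hgh⟩
    exact primeFactors_subset_of_dvd ha ⟨h, hgh.symm⟩
  · rintro g ⟨hg, hga⟩ g' ⟨hg', hg'a⟩ heq
    rw [← hg, ← hg']
    exact normalize_eq_normalize (hga.dvd_of_primeFactors_subset ha hg'a heq.subset)
      (hg'a.dvd_of_primeFactors_subset ha hga heq.superset)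
  · intro U hU
    obtain ⟨g, hg, hga, hgU⟩ := exists_isUnitaryDivisor_primeFactors_eq ha hU
    exact ⟨g, ⟨hg, hga⟩, hgU⟩

end UnitaryDivisor

section PrimeFactors

variable {F : Type*} [Field F] [DecidableEq F]

theorem mem_primeFactors_iff_monic {f g : F[X]} (hg : g ≠ 0) :
    f ∈ primeFactors g ↔ Irreducible f ∧ f.Monic ∧ f ∣ g := by
  rw [mem_primeFactors, Polynomial.mem_normalizedFactors_iff hg]

variable {φ : F →+* F} {q : ℕ} (hφ : ∀ a, φ a = a ^ q) (hφφ : Function.Involutive φ)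
  {M : F[X]} (hM : cdagger q M = M) (hM0 : M.coeff 0 ≠ 0)

include hφ hφφ

theorem cdagger_mem_primeFactors_cdagger {f g : F[X]} (hg0 : g.coeff 0 ≠ 0)
    (hf : f ∈ primeFactors g) : cdagger q f ∈ primeFactors (cdagger q g) := by
  have hg : g ≠ 0 := ne_zero_of_coeff_ne_zero hg0
  obtain ⟨hirr, hmonic, hdvd⟩ := (mem_primeFactors_iff_monic hg).1 hf
  have hf0 : f.coeff 0 ≠ 0 := coeff_zero_ne_zero_of_dvd hdvd hg0
  exact (mem_primeFactors_iff_monic (cdagger_monic hφ hg0).ne_zero).2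
    ⟨irreducible_cdagger hφ hφφ hmonic hf0 hirr, cdagger_monic hφ hf0,
      cdagger_dvd_cdagger hφ hdvd⟩

theorem leftInvOn_cdagger_primeFactors (hM0 : M.coeff 0 ≠ 0) :
    Set.LeftInvOn (cdagger q) (cdagger q) (primeFactors M : Set F[X]) := by
  intro f hf
  have hM : M ≠ 0 := ne_zero_of_coeff_ne_zero hM0
  obtain ⟨-, hmonic, hdvd⟩ := (mem_primeFactors_iff_monic hM).1 (Finset.mem_coe.1 hf)
  exact cdagger_cdagger hφ hφφ hmonic (coeff_zero_ne_zero_of_dvd hdvd hM0)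

include hM hM0

theorem mapsTo_cdagger_primeFactors :
    Set.MapsTo (cdagger q) (primeFactors M : Set F[X]) (primeFactors M) := by
  intro f hf
  simpa only [hM, Finset.mem_coe] using
    cdagger_mem_primeFactors_cdagger hφ hφφ hM0 (Finset.mem_coe.1 hf)

theorem cdagger_eq_self_iff_mapsTo_primeFactors {g : F[X]} (hg : g.Monic)
    (hgM : IsUnitaryDivisor g M) :
    cdagger q g = g ↔ Set.MapsTo (cdagger q) (primeFactors g : Set F[X]) (primeFactors g) := by
  obtain ⟨h, hrel, hgh⟩ := hgM
  have hg0 : g.coeff 0 ≠ 0 := coeff_zero_ne_zero_of_dvd ⟨h, hgh.symm⟩ hM0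
  have hg0' : (cdagger q g).coeff 0 ≠ 0 := coeff_zero_cdagger_ne_zero hφ hg hg0
  have hh : h ≠ 0 := right_ne_zero_of_mul (hgh.symm ▸ ne_zero_of_coeff_ne_zero hM0)
  refine ⟨fun heq => mapsTo_cdagger_primeFactors hφ hφφ heq hg0, fun hmaps => ?_⟩
  suffices hsub : primeFactors (cdagger q g) ⊆ primeFactors g by
    refine ((isRelPrime_cdagger_iff hφ hM hM0 hg hgh).1 ?_).1
    rw [isRelPrime_iff_disjoint_primeFactors (cdagger_monic hφ hg0).ne_zero hh]
    exact (disjoint_primeFactors hrel).mono_left hsub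
  intro f hf
  have hff : cdagger q f ∈ primeFactors g := by
    simpa only [cdagger_cdagger hφ hφφ hg hg0] using
      cdagger_mem_primeFactors_cdagger hφ hφφ hg0' hf
  rw [← leftInvOn_cdagger_primeFactors hφ hφφ hg0' hf]
  exact hmaps hff

end PrimeFactors

section ComplementaryDual

variable {F : Type*} [Field F]

theorem exists_monic_span_singleton_eq {C : Ideal F[X]} (hC : C ≠ ⊥) :
    ∃ g : F[X], g.Monic ∧ Ideal.span {g} = C := by
  classical
  obtain ⟨g, rfl⟩ := (IsPrincipalIdealRing.principal C).principal
  have hg : g ≠ 0 := fun h => hC (Ideal.span_singleton_eq_bot.2 h)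
  exact ⟨normalize g, monic_normalize hg,
    Ideal.span_singleton_eq_span_singleton.2 (normalize_associated g)⟩

variable {φ : F →+* F} {q n : ℕ} (hφ : ∀ a, φ a = a ^ q) (hn : 0 < n)

include hφ hn

theorem codewords_inter_hermDual_eq_singleton_zero_iff_exists (C : Ideal F[X]) :
    X ^ n - 1 ∈ C ∧ codewords C n ∩ hermDual q C n = {0} ↔
      ∃ g : F[X], (g.Monic ∧ IsUnitaryDivisor g (X ^ n - 1) ∧ cdagger q g = g) ∧
        Ideal.span {g} = C := by
  have hM : (X ^ n - 1 : F[X]) ≠ 0 := X_pow_sub_C_ne_zero hn 1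
  have hM0 : (X ^ n - 1 : F[X]).coeff 0 ≠ 0 := by simp [coeff_X_pow, hn.ne]
  have hdual {g h : F[X]} (hg : g.Monic) (hgh : g * h = X ^ n - 1) :=
    (codewords_inter_hermDual_eq_singleton_zero_iff hφ hn hgh).trans
      (isRelPrime_cdagger_iff hφ (cdagger_X_pow_sub_one hφ hn.ne') hM0 hg hgh)
  constructor
  · rintro ⟨hMC, hC⟩
    obtain ⟨g, hg, rfl⟩ :=
      exists_monic_span_singleton_eq fun h : C = ⊥ => hM ((Submodule.mem_bot _).1 (h ▸ hMC))
    obtain ⟨h, hgh⟩ := Ideal.mem_span_singleton.1 hMC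
    obtain ⟨heq, hrel⟩ := (hdual hg hgh.symm).1 hC
    exact ⟨g, ⟨hg, ⟨h, hrel, hgh.symm⟩, heq⟩, rfl⟩
  · rintro ⟨g, ⟨hg, ⟨h, hrel, hgh⟩, heq⟩, rfl⟩
    exact ⟨Ideal.mem_span_singleton.2 ⟨h, hgh.symm⟩, (hdual hg hgh).2 ⟨heq, hrel⟩⟩

end ComplementaryDual

section Involution

variable {A : Type*}

/-- The orbits `{a, d a}` of the elements of a set on which the map `d` is an involution. -/
def involutionOrbits (d : A → A) (S : Set A) : Set (Set A) :=
  (fun a => {a, d a}) '' S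

theorem involutionOrbits_eq_union (d : A → A) (S : Set A) :
    involutionOrbits d S =
      singleton '' {a | a ∈ S ∧ a = d a} ∪ {s | ∃ a ∈ S, a ≠ d a ∧ s = {a, d a}} := by
  ext s
  constructor
  · rintro ⟨a, ha, rfl⟩
    rcases eq_or_ne a (d a) with h | h
    · exact Or.inl ⟨a, ⟨ha, h⟩, by simp only [← h, Set.pair_eq_singleton]⟩
    · exact Or.inr ⟨a, ha, h, rfl⟩
  · rintro (⟨a, ⟨ha, h⟩, rfl⟩ | ⟨a, ha, -, rfl⟩)
    · exact ⟨a, ha, by simp only [← h, Set.pair_eq_singleton]⟩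
    · exact ⟨a, ha, rfl⟩

theorem ncard_involutionOrbits (d : A → A) {S : Set A} (hS : S.Finite) :
    (involutionOrbits d S).ncard =
      {a | a ∈ S ∧ a = d a}.ncard + {s : Set A | ∃ a ∈ S, a ≠ d a ∧ s = {a, d a}}.ncard := by
  have hfin : (involutionOrbits d S).Finite := hS.image _
  have hdisj : Disjoint (singleton '' {a | a ∈ S ∧ a = d a})
      {s : Set A | ∃ a ∈ S, a ≠ d a ∧ s = {a, d a}} := by
    rw [Set.disjoint_left]
    rintro _ ⟨b, -, rfl⟩ ⟨a, -, hne, heq⟩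
    exact hne (Set.subsingleton_singleton.anti (Eq.superset heq) (Or.inl rfl) (Or.inr rfl))
  rw [involutionOrbits_eq_union] at hfin ⊢
  rw [Set.ncard_union_eq hdisj (hfin.subset Set.subset_union_left)
    (hfin.subset Set.subset_union_right), Set.ncard_image_of_injective _ Set.singleton_injective]

variable {d : A → A} {S : Set A}

theorem eq_pair_of_mem_involutionOrbits (hinv : Set.LeftInvOn d d S) {s : Set A}
    (hs : s ∈ involutionOrbits d S) {a : A} (ha : a ∈ s) : s = {a, d a} := by
  obtain ⟨b, hb, rfl⟩ := hs
  rcases ha with rfl | rfl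
  · rfl
  · simp only [hinv hb, Set.pair_comm]

theorem subset_of_mem_involutionOrbits (hmaps : Set.MapsTo d S S) {s : Set A}
    (hs : s ∈ involutionOrbits d S) : s ⊆ S := by
  obtain ⟨a, ha, rfl⟩ := hs
  exact Set.pair_subset ha (hmaps ha)

theorem mem_sUnion_iff_pair_mem (hinv : Set.LeftInvOn d d S) {𝒰 : Set (Set A)}
    (h𝒰 : 𝒰 ⊆ involutionOrbits d S) {a : A} : a ∈ ⋃₀ 𝒰 ↔ {a, d a} ∈ 𝒰 := by
  refine ⟨fun ⟨s, hs, has⟩ => ?_, fun h => ⟨_, h, Set.mem_insert a _⟩⟩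
  rwa [← eq_pair_of_mem_involutionOrbits hinv (h𝒰 hs) has]

theorem injOn_sUnion_powerset_involutionOrbits (hinv : Set.LeftInvOn d d S) :
    Set.InjOn Set.sUnion (𝒫 (involutionOrbits d S)) := by
  intro 𝒰 h𝒰 𝒱 h𝒱 heq
  ext s
  constructor <;> intro hs
  · obtain ⟨a, -, rfl⟩ := h𝒰 hs
    rwa [← mem_sUnion_iff_pair_mem hinv h𝒱, ← heq, mem_sUnion_iff_pair_mem hinv h𝒰]
  · obtain ⟨a, -, rfl⟩ := h𝒱 hs
    rwa [← mem_sUnion_iff_pair_mem hinv h𝒰, heq, mem_sUnion_iff_pair_mem hinv h𝒱]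

theorem bijOn_sUnion_powerset_involutionOrbits (hmaps : Set.MapsTo d S S)
    (hinv : Set.LeftInvOn d d S) :
    Set.BijOn Set.sUnion (𝒫 (involutionOrbits d S)) {U | U ⊆ S ∧ Set.MapsTo d U U} := by
  refine ⟨fun 𝒰 h𝒰 => ⟨?_, ?_⟩, injOn_sUnion_powerset_involutionOrbits hinv, ?_⟩
  · exact Set.sUnion_subset fun s hs => subset_of_mem_involutionOrbits hmaps (h𝒰 hs)
  · rintro a ⟨s, hs, ha⟩
    refine ⟨s, hs, ?_⟩
    rw [eq_pair_of_mem_involutionOrbits hinv (h𝒰 hs) ha]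
    exact Set.mem_insert_of_mem a rfl
  · rintro U ⟨hUS, hU⟩
    refine ⟨involutionOrbits d U, Set.image_mono hUS, ?_⟩
    refine (Set.sUnion_subset fun s => subset_of_mem_involutionOrbits hU).antisymm fun a ha => ?_
    exact ⟨{a, d a}, Set.mem_image_of_mem _ ha, Set.mem_insert a _⟩

theorem ncard_mapsTo_subsets_eq_two_pow (hS : S.Finite) (hmaps : Set.MapsTo d S S)
    (hinv : Set.LeftInvOn d d S) :
    {U | U ⊆ S ∧ Set.MapsTo d U U}.ncard = 2 ^ (involutionOrbits d S).ncard := by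
  rw [← Set.ncard_powerset (involutionOrbits d S) (hS.image _),
    ← (bijOn_sUnion_powerset_involutionOrbits hmaps hinv).ncard_eq]

end Involution

section Counting

variable {F : Type*} [Field F] {n : ℕ}

theorem scrimFactors_eq_primeFactors_fixed [DecidableEq F] (q : ℕ) (hn : 0 < n) :
    scrimFactors F q n =
      {f | f ∈ (primeFactors (X ^ n - 1 : F[X]) : Set F[X]) ∧ f = cdagger q f} := by
  have hM : (X ^ n - 1 : F[X]) ≠ 0 := X_pow_sub_C_ne_zero hn 1
  ext f
  simp only [scrimFactors, IsSCRIM, Set.mem_ofPred_eq, Finset.mem_coe,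
    mem_primeFactors_iff_monic hM]
  tauto

theorem crimPairs_eq_primeFactors_pairs [DecidableEq F] (q : ℕ) (hn : 0 < n) :
    crimPairs F q n =
      {s | ∃ f ∈ (primeFactors (X ^ n - 1 : F[X]) : Set F[X]),
        f ≠ cdagger q f ∧ s = {f, cdagger q f}} := by
  have hM : (X ^ n - 1 : F[X]) ≠ 0 := X_pow_sub_C_ne_zero hn 1
  ext s
  simp only [crimPairs, Set.mem_ofPred_eq, Finset.mem_coe, mem_primeFactors_iff_monic hM]
  simp only [and_assoc, and_left_comm]

theorem ncard_involutionOrbits_cdagger [DecidableEq F] (q : ℕ) (hn : 0 < n) :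
    (involutionOrbits (cdagger q) (primeFactors (X ^ n - 1 : F[X]) : Set F[X])).ncard =
      (scrimFactors F q n).ncard + (crimPairs F q n).ncard := by
  rw [ncard_involutionOrbits _ (Finset.finite_toSet _), scrimFactors_eq_primeFactors_fixed q hn,
    crimPairs_eq_primeFactors_pairs q hn]

variable {φ : F →+* F} {q : ℕ} (hφ : ∀ a, φ a = a ^ q)

include hφ

theorem bijOn_span_complementaryDual (hn : 0 < n) :
    Set.BijOn (fun g => Ideal.span {g})
      {g : F[X] | g.Monic ∧ IsUnitaryDivisor g (X ^ n - 1) ∧ cdagger q g = g}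
      {C | X ^ n - 1 ∈ C ∧ codewords C n ∩ hermDual q C n = {0}} := by
  refine ⟨fun g hg => ?_, fun g hg g' hg' h => ?_, fun C hC => ?_⟩
  · exact (codewords_inter_hermDual_eq_singleton_zero_iff_exists hφ hn _).2 ⟨g, hg, rfl⟩
  · exact eq_of_monic_of_associated hg.1 hg'.1 (Ideal.span_singleton_eq_span_singleton.1 h)
  · exact (codewords_inter_hermDual_eq_singleton_zero_iff_exists hφ hn C).1 hC

theorem bijOn_primeFactors_cdagger [DecidableEq F] (hφφ : Function.Involutive φ) {M : F[X]}
    (hM : cdagger q M = M) (hM0 : M.coeff 0 ≠ 0) :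
    Set.BijOn (fun g => (primeFactors g : Set F[X]))
      {g : F[X] | g.Monic ∧ IsUnitaryDivisor g M ∧ cdagger q g = g}
      {U | U ⊆ (primeFactors M : Set F[X]) ∧ Set.MapsTo (cdagger q) U U} := by
  have hMne : M ≠ 0 := ne_zero_of_coeff_ne_zero hM0
  have hbij := bijOn_primeFactors hMne
  have hnorm {g : F[X]} (hg : IsUnitaryDivisor g M) : normalize g = g ↔ g.Monic := by
    obtain ⟨h, -, rfl⟩ := hg
    exact normalize_eq_self_iff_monic (left_ne_zero_of_mul hMne)
  have hself {g : F[X]} (hg : g.Monic) (hgM : IsUnitaryDivisor g M) :=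
    cdagger_eq_self_iff_mapsTo_primeFactors hφ hφφ hM hM0 hg hgM
  refine ⟨?_, ?_, ?_⟩
  · rintro g ⟨hg, hgM, heq⟩
    exact ⟨Finset.coe_subset.2 (hbij.mapsTo ⟨(hnorm hgM).2 hg, hgM⟩), (hself hg hgM).1 heq⟩
  · rintro g ⟨hg, hgM, -⟩ g' ⟨hg', hgM', -⟩ heq
    exact hbij.injOn ⟨(hnorm hgM).2 hg, hgM⟩ ⟨(hnorm hgM').2 hg', hgM'⟩ (Finset.coe_injective heq)
  · rintro U ⟨hUM, hU⟩
    lift U to Finset F[X] using (Finset.finite_toSet _).subset hUM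
    obtain ⟨g, ⟨hg, hgM⟩, rfl⟩ := hbij.surjOn (Finset.coe_subset.1 hUM)
    have hmonic : g.Monic := (hnorm hgM).1 hg
    exact ⟨g, ⟨hmonic, hgM, (hself hmonic hgM).2 hU⟩, rfl⟩

theorem ncard_complementaryDual [DecidableEq F] (hφφ : Function.Involutive φ) (hn : 0 < n) :
    {C : Ideal F[X] | X ^ n - 1 ∈ C ∧ codewords C n ∩ hermDual q C n = {0}}.ncard =
      2 ^ (involutionOrbits (cdagger q) (primeFactors (X ^ n - 1 : F[X]) : Set F[X])).ncard := by
  have hM : cdagger q (X ^ n - 1 : F[X]) = X ^ n - 1 := cdagger_X_pow_sub_one hφ hn.ne'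
  have hM0 : (X ^ n - 1 : F[X]).coeff 0 ≠ 0 := by simp [coeff_X_pow, hn.ne]
  rw [← (bijOn_span_complementaryDual hφ hn).ncard_eq,
    (bijOn_primeFactors_cdagger hφ hφφ hM hM0).ncard_eq]
  exact ncard_mapsTo_subsets_eq_two_pow (Finset.finite_toSet _)
    (mapsTo_cdagger_primeFactors hφ hφφ hM hM0) (leftInvOn_cdagger_primeFactors hφ hφφ hM0)

end Counting

theorem stmt17_general {p m ν n' q : ℕ} (hq : q = p ^ m) {F : Type*} [Field F] [ExpChar F p]
    (hF : ∀ a : F, a ^ q ^ 2 = a) (hn' : 0 < n') :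
    {C : Ideal F[X] | (X : F[X]) ^ (p ^ ν * n') - 1 ∈ C ∧
        codewords C (p ^ ν * n') ∩ hermDual q C (p ^ ν * n') = {0}}.ncard =
      2 ^ ((scrimFactors F q n').ncard + (crimPairs F q n').ncard) := by
  classical
  have hφ (a : F) : iterateFrobenius F p m a = a ^ q := by rw [iterateFrobenius_def, hq]
  have hφφ : Function.Involutive (iterateFrobenius F p m) := fun a => by
    rw [hφ, hφ, ← pow_mul, ← sq, hF]
  have hpν : 0 < p ^ ν := expChar_pow_pos F p ν
  have hpow : (X ^ (p ^ ν * n') - 1 : F[X]) = (X ^ n' - 1) ^ p ^ ν := by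
    rw [sub_pow_expChar_pow, one_pow, ← pow_mul, mul_comm]
  rw [ncard_complementaryDual hφ hφφ (Nat.mul_pos hpν hn'), hpow, primeFactors_pow _ hpν.ne',
    ncard_involutionOrbits_cdagger q hn']

theorem stmt17 {p m ν n' q : ℕ} (hp : p.Prime) (hm : 0 < m) (hq : q = p ^ m)
    {F : Type*} [Field F] [Fintype F] (hF : Fintype.card F = q ^ 2)
    (hn' : 0 < n') (hpn' : ¬ p ∣ n') :
    {C : Ideal F[X] | (X : F[X]) ^ (p ^ ν * n') - 1 ∈ C ∧
        codewords C (p ^ ν * n') ∩ hermDual q C (p ^ ν * n') = {0}}.ncard =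
      2 ^ ((scrimFactors F q n').ncard + (crimPairs F q n').ncard) := by
  have := Fact.mk hp
  have := charP_of_card_eq_prime_pow (f := m * 2) (by rw [hF, hq, pow_mul] : Fintype.card F = _)
  exact stmt17_general hq (fun a => by rw [← hF, FiniteField.pow_card]) hn'
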